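/- Let I be a set and U an ultrafilter over I, and suppose U-AC_I holds. Let {A_i : i ∈ I} be an I-indexed family of pairwise equipotent sets such that each A_i has at least two elements and ∏_{i∈I} A_i ≠ ∅. Then ∏_{i∈I} A_i/U has at least two elements; moreover, for any fixed f ∈ ∏_{i∈I} A_i there exists h ∈ ∏_{i∈I} A_i with [f] ≠ [h]. -/

import Mathlib

open Filter

universe u

/-- `U`-`AC_I`: for every `I`-indexed family of nonempty sets there is a function `f`
on `I` such that `{i ∈ I : f i ∈ A i} ∈ U`. -/
def UAC {I : Type u} (U : Ultrafilter I) : Prop :=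
  ∀ {α : Type u} (A : I → Set α), (∀ i, (A i).Nonempty) →
    ∃ f : I → α, {i | f i ∈ A i} ∈ U

/-!
Given `f ∈ ∏ A_i`, apply `U`-`AC_I` to the sets `{h ∈ ∏ A_j : h(i) ≠ f(i)}` rather than to
`A_i ∖ {f(i)}`: the diagonal `i ↦ g(i)(i)` of the resulting `g : I → ∏ A_j` then lies in `∏ A_i`
with no correction on a `U`-null set, and it differs from `f` at `U`-almost every `i`.
-/

theorem ultraproduct_coe_ne_iff {I : Type*} {A : I → Type*} {U : Ultrafilter I}
    {f h : ∀ i, A i} :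
    (↑f : (U : Filter I).Product A) ≠ (↑h : (U : Filter I).Product A) ↔
      ∀ᶠ i in U, f i ≠ h i := by
  rw [Ultrafilter.eventually_not]
  exact not_congr Quotient.eq

theorem UAC.exists_pi_eventually {I : Type u} {U : Ultrafilter I} (hU : UAC U)
    {A : I → Type u} [Nonempty (∀ i, A i)] {p : ∀ i, A i → Prop}
    (hp : ∀ᶠ i in U, ∃ x, p i x) : ∃ h : ∀ i, A i, ∀ᶠ i in U, p i (h i) := by
  classical
  inhabit ∀ i, A i
  have hB : ∀ i, {h : ∀ j, A j | (∃ x, p i x) → p i (h i)}.Nonempty := by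
    intro i
    by_cases hi : ∃ x, p i x
    · obtain ⟨x, hx⟩ := hi
      exact ⟨Function.update default i x, fun _ => by rwa [Function.update_self]⟩
    · exact ⟨default, fun hx => absurd hx hi⟩
  obtain ⟨g, hg⟩ := hU _ hB
  exact ⟨fun i => g i i, hp.mp hg⟩

theorem UAC.exists_coe_ne {I : Type u} {U : Ultrafilter I} (hU : UAC U) {A : I → Type u}
    (hA : ∀ᶠ i in U, Nontrivial (A i)) (f : ∀ i, A i) :
    ∃ h : ∀ i, A i,
      (↑f : (U : Filter I).Product A) ≠ (↑h : (U : Filter I).Product A) := by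
  have : Nonempty (∀ i, A i) := ⟨f⟩
  obtain ⟨h, hh⟩ := hU.exists_pi_eventually (hA.mono fun i _ => exists_ne (f i))
  exact ⟨h, ultraproduct_coe_ne_iff.2 (hh.mono fun _ => Ne.symm)⟩

theorem quotient_nontrivial_of_uac_general {I : Type u} (U : Ultrafilter I) (hUAC : UAC U)
    (A : I → Type u) (htwo : ∀ᶠ i in U, Nontrivial (A i)) (hne : Nonempty (∀ i, A i)) :
    Nontrivial ((U : Filter I).Product A) ∧
      ∀ f : ∀ i, A i, ∃ h : ∀ i, A i,
        (↑f : (U : Filter I).Product A) ≠ (↑h : (U : Filter I).Product A) := by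
  obtain ⟨f⟩ := hne
  obtain ⟨h, hfh⟩ := hUAC.exists_coe_ne htwo f
  exact ⟨⟨_, _, hfh⟩, hUAC.exists_coe_ne htwo⟩

/-- Assume `U`-`AC_I`. If `{A_i : i ∈ I}` is a family of pairwise
equipotent sets, each with at least two elements, whose product is nonempty, then the
quotient `∏ A_i/U` has at least two elements; moreover for every `f ∈ ∏ A_i` there is
`h ∈ ∏ A_i` with `[f] ≠ [h]`. -/
theorem quotient_nontrivial_of_uac {I : Type u} {α : Type u} (U : Ultrafilter I)
    (hUAC : UAC U) (A : I → Set α)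
    (hequi : ∀ i j, Nonempty (↥(A i) ≃ ↥(A j)))
    (htwo : ∀ i, (A i).Nontrivial)
    (hne : Nonempty (∀ i, A i)) :
    Nontrivial ((U : Filter I).Product fun i => ↥(A i)) ∧
      ∀ f : ∀ i, A i, ∃ h : ∀ i, A i,
        (↑f : (U : Filter I).Product fun i => ↥(A i)) ≠
          (↑h : (U : Filter I).Product fun i => ↥(A i)) :=
  quotient_nontrivial_of_uac_general U hUAC (fun i => ↥(A i))
    (.of_forall fun i => (htwo i).coe_sort) hne
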